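/- arXiv:2004.12653 — 4 statements merged into one kernel-verified Lean document; each statement's English description precedes it below -/
import Mathlib

section
/- The kneading group K is not elementary subexponentially amenable: K does not belong to the smallest class of groups that contains all finitely generated groups of subexponential word growth and is closed under isomorphism, taking subgroups, taking quotients, group extensions, and directed unions. -/
/-- States of the kneading automaton: `a i` is the paper's `a_{i+1}` (for `i < k`),
`b i` is the paper's `b_{i+1}` (for `i < p`), and `id` is the identity state. -/
inductive KState : Type
  | a (i : ℕ)
  | b (i : ℕ)
  | id
  deriving DecidableEq

/-- Transition function of the kneading automaton `𝒦(x₁…x_k, y₁…y_p)`, where the paper's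
`x_i` is `x (i-1)` and `y_i` is `y (i-1)`.  `KTrans k p x y s z = (output letter, restriction)`. -/
def KTrans (k p : ℕ) (x y : ℕ → ℤ) : KState → ℤ → ℤ × KState
  | .a 0, z => (z + 1, .id)
  | .a (i+1), z => if z = x i then (z, .a i) else (z, .id)
  | .b 0, z =>
      if z = x (k-1) then (z, .a (k-1))
      else if z = y (p-1) then (z, .b (p-1))
      else (z, .id)
  | .b (i+1), z => if z = y i then (z, .b i) else (z, .id)
  | .id, z => (z, .id)

/-- The action of a state on the tree `ℤ*` of finite words over `ℤ`,
defined recursively by `q(zv) = q(z)·(q|_z)(v)`. -/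
def stateAct (k p : ℕ) (x y : ℕ → ℤ) : KState → List ℤ → List ℤ
  | _, [] => []
  | s, z :: v => (KTrans k p x y s z).1 :: stateAct k p x y (KTrans k p x y s z).2 v

/-- The generating states `S = {a₁,…,a_k, b₁,…,b_p}`. -/
def IsGen (k p : ℕ) (s : KState) : Prop :=
  (∃ i, i < k ∧ s = .a i) ∨ (∃ j, j < p ∧ s = .b j)

/-- The generators of the kneading group, as permutations of `List ℤ` whose underlying
function is the action of a generating state. -/
def SGens (k p : ℕ) (x y : ℕ → ℤ) : Set (Equiv.Perm (List ℤ)) :=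
  {g | ∃ s : KState, IsGen k p s ∧ ⇑g = stateAct k p x y s}

/-- The kneading group `K = 𝕂(x₁…x_k, y₁…y_p)`. -/
def Kgroup (k p : ℕ) (x y : ℕ → ℤ) : Subgroup (Equiv.Perm (List ℤ)) :=
  Subgroup.closure (SGens k p x y)

/-- The ball of radius `n`: elements expressible as a product of at most `n`
elements of `S ∪ S⁻¹`. -/
def wordBall {G : Type*} [Group G] (S : Set G) (n : ℕ) : Set G :=
  {g | ∃ l : List G, l.length ≤ n ∧ (∀ a ∈ l, a ∈ S ∨ a⁻¹ ∈ S) ∧ l.prod = g}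

/-- A finitely generated group of subexponential word growth. -/
def HasSubexpGrowth (G : Type) [Group G] : Prop :=
  ∃ S : Finset G, Subgroup.closure (S : Set G) = ⊤ ∧
    ∀ C : ℝ, 1 < C → ∀ᶠ n in Filter.atTop, ((wordBall (S : Set G) n).ncard : ℝ) < C ^ n

/-- A class of groups containing all finitely generated groups of subexponential word
growth and closed under isomorphism, subgroups, quotients, extensions and directed unions. -/
def IsClosedClass (C : ∀ (G : Type) [Group G], Prop) : Prop :=
  (∀ (G : Type) [Group G], HasSubexpGrowth G → C G) ∧
  (∀ (G H : Type) [Group G] [Group H], Nonempty (G ≃* H) → C G → C H) ∧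
  (∀ (G : Type) [Group G] (H : Subgroup G), C G → C H) ∧
  (∀ (G : Type) [Group G] (N : Subgroup G) [N.Normal], C G → C (G ⧸ N)) ∧
  (∀ (G : Type) [Group G] (N : Subgroup G) [N.Normal], C N → C (G ⧸ N) → C G) ∧
  (∀ (G : Type) [Group G] (ι : Type) (H : ι → Subgroup G),
    Directed (· ≤ ·) H → (∀ i, C (H i)) → (∀ g : G, ∃ i, g ∈ H i) → C G)

/-- Membership in the smallest such class: elementary subexponentially amenable groups. -/
def IsElemSubexpAmenable (G : Type) [Group G] : Prop :=
  ∀ C : ∀ (G : Type) [Group G], Prop, IsClosedClass C → C G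


/-! ### Abstract part -/

/-- `K` is a section (quotient of a subgroup) of `G`. -/
def IsSec (K : Type) [Group K] (G : Type) [Group G] : Prop :=
  ∃ (H : Subgroup G) (φ : H →* K), Function.Surjective φ

/-- positive word in two elements -/
def posWord {G : Type} [Group G] (u v : G) (l : List Bool) : G :=
  (l.map (fun e => if e then u else v)).prod

lemma isSec_of_fun {K G : Type} [Group K] [Group G] (R : G → K → Prop)
    (h1 : R 1 1) (hm : ∀ a b c d, R a b → R c d → R (a * c) (b * d))
    (hi : ∀ a b, R a b → R a⁻¹ b⁻¹)
    (hu : ∀ a b c, R a b → R a c → b = c) (hs : ∀ b, ∃ a, R a b) : IsSec K G := by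
  let H : Subgroup G :=
    { carrier := {a | ∃ b, R a b}
      one_mem' := ⟨1, h1⟩
      mul_mem' := by
        rintro a c ⟨b, hb⟩ ⟨d, hd⟩
        exact ⟨b * d, hm _ _ _ _ hb hd⟩
      inv_mem' := by
        rintro a ⟨b, hb⟩
        exact ⟨b⁻¹, hi _ _ hb⟩ }
  have hH : ∀ a : H, ∃ b, R a b := fun a => a.2
  choose f hf using hH
  refine ⟨H, MonoidHom.mk' f ?_, ?_⟩
  · intro a b
    exact hu _ _ _ (hf (a * b)) (hm _ _ _ _ (hf a) (hf b))
  · intro b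
    obtain ⟨a, ha⟩ := hs b
    exact ⟨⟨a, b, ha⟩, hu _ _ _ (hf ⟨a, b, ha⟩) ha⟩

lemma isSec_trans {K G L : Type} [Group K] [Group G] [Group L]
    (H : Subgroup G) (φ : H →* L) (hφ : Function.Surjective φ) (h : IsSec K L) :
    IsSec K G := by
  obtain ⟨M, ψ, hψ⟩ := h
  refine isSec_of_fun (fun a b => ∃ (ha : a ∈ H) (hb : φ ⟨a, ha⟩ ∈ M), ψ ⟨_, hb⟩ = b)
    ?_ ?_ ?_ ?_ ?_
  · refine ⟨H.one_mem, ?_, ?_⟩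
    · have : φ ⟨1, H.one_mem⟩ = 1 := map_one φ
      rw [this]; exact M.one_mem
    · have : φ ⟨1, H.one_mem⟩ = 1 := map_one φ
      simp only [this]
      exact map_one ψ
  · rintro a b c d ⟨ha, hb, rfl⟩ ⟨hc, hd, rfl⟩
    have e : φ ⟨a * c, H.mul_mem ha hc⟩ = φ ⟨a, ha⟩ * φ ⟨c, hc⟩ := by
      rw [← map_mul]; rfl
    refine ⟨H.mul_mem ha hc, ?_, ?_⟩
    · rw [e]; exact M.mul_mem hb hd
    · simp only [e]
      exact map_mul ψ ⟨_, hb⟩ ⟨_, hd⟩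
  · rintro a b ⟨ha, hb, rfl⟩
    have e : φ ⟨a⁻¹, H.inv_mem ha⟩ = (φ ⟨a, ha⟩)⁻¹ := by
      rw [← map_inv]; rfl
    refine ⟨H.inv_mem ha, ?_, ?_⟩
    · rw [e]; exact M.inv_mem hb
    · simp only [e]
      exact map_inv ψ ⟨_, hb⟩
  · rintro a b c ⟨ha, hb, rfl⟩ ⟨_, _, rfl⟩
    rfl
  · intro b
    obtain ⟨⟨m, hm⟩, rfl⟩ := hψ b
    obtain ⟨⟨a, ha⟩, rfl⟩ := hφ m
    exact ⟨a, ha, hm, rfl⟩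

lemma isSec_of_injective {K G L : Type} [Group K] [Group G] [Group L]
    (f : L →* G) (hf : Function.Injective f) (h : IsSec K L) : IsSec K G :=
  isSec_trans f.range (MonoidHom.ofInjective hf).symm.toMonoidHom
    (MonoidHom.ofInjective hf).symm.surjective h

lemma isSec_of_surjective {K G L : Type} [Group K] [Group G] [Group L]
    (f : G →* L) (hf : Function.Surjective f) (h : IsSec K L) : IsSec K G :=
  isSec_trans ⊤ (f.comp (⊤ : Subgroup G).subtype)
    (fun b => by obtain ⟨a, rfl⟩ := hf b; exact ⟨⟨a, trivial⟩, rfl⟩) h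

lemma wordBall_finite {G : Type} [Group G] (S : Finset G) (n : ℕ) :
    (wordBall (S : Set G) n).Finite := by
  let T : Set G := (S : Set G) ∪ (S : Set G)⁻¹
  have hT : T.Finite := S.finite_toSet.union S.finite_toSet.inv
  have : Finite T := hT
  refine ((List.finite_length_le T n).image
    (fun l => (l.map Subtype.val).prod)).subset ?_
  rintro g ⟨l, hl, hm, rfl⟩
  have hm' : ∀ a ∈ l, a ∈ T := by
    intro a ha
    rcases hm a ha with h | h
    · exact Or.inl h
    · exact Or.inr (by simpa using h)
  refine ⟨l.attach.map (fun a => ⟨a.1, hm' a.1 a.2⟩), by simpa using hl, ?_⟩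
  simp [List.map_map, Function.comp_def]

lemma exists_list_of_mem_closure' {G : Type} [Group G] {S : Set G} {g : G}
    (hg : g ∈ Subgroup.closure S) :
    ∃ l : List G, (∀ a ∈ l, a ∈ S ∨ a⁻¹ ∈ S) ∧ l.prod = g := by
  induction hg using Subgroup.closure_induction with
  | mem a ha => exact ⟨[a], by simp [ha], by simp⟩
  | one => exact ⟨[], by simp, by simp⟩
  | mul a b _ _ iha ihb =>
    obtain ⟨l, h, rfl⟩ := iha
    obtain ⟨m, h', rfl⟩ := ihb
    refine ⟨l ++ m, ?_, by simp⟩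
    intro a ha
    rcases List.mem_append.1 ha with h1 | h1
    · exact h a h1
    · exact h' a h1
  | inv a _ iha =>
    obtain ⟨l, h, rfl⟩ := iha
    refine ⟨(l.map (fun a => a⁻¹)).reverse, ?_, (List.prod_inv_reverse l).symm⟩
    intro a ha
    simp only [List.mem_reverse, List.mem_map] at ha
    obtain ⟨b, hb, rfl⟩ := ha
    rw [inv_inv]
    exact (h b hb).symm

lemma mem_wordBall {G : Type} [Group G] (S : Finset G)
    (hS : Subgroup.closure (S : Set G) = ⊤) (g : G) : ∃ L, g ∈ wordBall (S : Set G) L := by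
  have hg : g ∈ Subgroup.closure (S : Set G) := by rw [hS]; trivial
  obtain ⟨l, hl, rfl⟩ := exists_list_of_mem_closure' hg
  exact ⟨l.length, l, le_rfl, hl, rfl⟩

lemma posWord_mem {G : Type} [Group G] (S : Set G) (L : ℕ) (u v : G)
    (hu : u ∈ wordBall S L) (hv : v ∈ wordBall S L) (l : List Bool) :
    posWord u v l ∈ wordBall S (l.length * L) := by
  induction l with
  | nil => exact ⟨[], by simp, by simp, rfl⟩
  | cons e l ih =>
    have he : (if e then u else v) ∈ wordBall S L := by
      cases e <;> simpa
    obtain ⟨m, hm1, hm2, hm3⟩ := ih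
    obtain ⟨m', h1, h2, h3⟩ := he
    refine ⟨m' ++ m, ?_, ?_, ?_⟩
    · simp only [List.length_append, List.length_cons]; nlinarith
    · intro a ha
      rcases List.mem_append.1 ha with h | h
      · exact h2 a h
      · exact hm2 a h
    · rw [List.prod_append, h3, hm3]
      simp [posWord]

lemma not_subexp {K G : Type} [Group K] [Group G] (u v : K)
    (huv : ∀ l l' : List Bool, l.length = l'.length → posWord u v l = posWord u v l' → l = l')
    (h : IsSec K G) : ¬ HasSubexpGrowth G := by
  rintro ⟨S, hS, hgr⟩
  obtain ⟨H, φ, hφ⟩ := h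
  obtain ⟨u', rfl⟩ := hφ u
  obtain ⟨v', rfl⟩ := hφ v
  obtain ⟨L1, h1⟩ := mem_wordBall S hS u'
  obtain ⟨L2, h2⟩ := mem_wordBall S hS v'
  set L := L1 + L2 + 1 with hL
  have mono : ∀ {a b : ℕ} {g : G}, a ≤ b → g ∈ wordBall (S : Set G) a →
      g ∈ wordBall (S : Set G) b := by
    rintro a b g hab ⟨l, hl, h⟩
    exact ⟨l, hl.trans hab, h⟩
  have h1' := mono (show L1 ≤ L by omega) h1
  have h2' := mono (show L2 ≤ L by omega) h2
  have hpos : ∀ l, φ (posWord u' v' l) = posWord (φ u') (φ v') l := by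
    intro l
    simp only [posWord, map_list_prod, List.map_map]
    congr 2
    funext e
    cases e <;> simp
  have hcoe : ∀ l, ((posWord u' v' l : H) : G) = posWord (u' : G) (v' : G) l := by
    intro l
    have := map_list_prod H.subtype (l.map (fun e => if e then u' else v'))
    simp only [Subgroup.subtype_apply, List.map_map] at this
    rw [posWord, this, posWord]
    congr 2
    funext e
    cases e <;> simp
  have hcard : ∀ n, 2 ^ n ≤ (wordBall (S : Set G) (n * L)).ncard := by
    intro n
    have hinj : Function.Injective
        (fun l : List.Vector Bool n => posWord (u' : G) (v' : G) l.1) := by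
      intro l l' hll
      apply Subtype.ext
      apply huv _ _ (l.2.trans l'.2.symm)
      rw [← hpos, ← hpos]
      congr 1
      apply Subtype.ext
      rw [hcoe, hcoe]; exact hll
    have hr : (Set.range (fun l : List.Vector Bool n =>
        posWord (u' : G) (v' : G) l.1)).ncard = 2 ^ n := by
      rw [← Set.image_univ, Set.ncard_image_of_injective _ hinj, Set.ncard_univ,
        Nat.card_eq_fintype_card, card_vector, Fintype.card_bool]
    rw [← hr]
    apply Set.ncard_le_ncard _ (wordBall_finite S _)
    rintro _ ⟨l, rfl⟩
    have := posWord_mem (S : Set G) L u' v' h1' h2' l.1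
    rwa [l.2] at this
  have hLpos : (0 : ℝ) < L := by rw [hL]; positivity
  obtain ⟨N, hN⟩ := Filter.eventually_atTop.1
    (hgr ((2 : ℝ) ^ ((1 : ℝ) / L)) (Real.one_lt_rpow (by norm_num) (by positivity)))
  have hlt := hN (N * L) (Nat.le_mul_of_pos_right N (by omega))
  have e : ((2 : ℝ) ^ ((1 : ℝ) / L)) ^ (N * L) = 2 ^ N := by
    rw [mul_comm, pow_mul, ← Real.rpow_natCast (_ ^ _) L, ← Real.rpow_mul (by norm_num),
      one_div, inv_mul_cancel₀ hLpos.ne', Real.rpow_one]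
  rw [e] at hlt
  have := hcard N
  have : ((2 : ℝ) ^ N) ≤ ((wordBall (S : Set G) (N * L)).ncard : ℝ) := by exact_mod_cast this
  linarith

theorem abstract_main (K : Type) [Group K] (T : Set K) (hT : T.Finite)
    (hTK : Subgroup.closure T = ⊤) (u v : K)
    (huv : ∀ l l' : List Bool, l.length = l'.length → posWord u v l = posWord u v l' → l = l')
    (hN : ∀ N : Subgroup K, N.Normal → N ≠ ⊥ → IsSec K N) :
    ¬ IsElemSubexpAmenable K := by
  intro h
  have := h (fun G _ => ¬ IsSec K G) ?_
  · exact this ⟨⊤, (⊤ : Subgroup K).subtype, fun b => ⟨⟨b, trivial⟩, rfl⟩⟩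
  refine ⟨?_, ?_, ?_, ?_, ?_, ?_⟩
  · intro G _ hG hs
    exact not_subexp u v huv hs hG
  · rintro G H _ _ ⟨e⟩ hG hH
    exact hG (isSec_of_surjective e.toMonoidHom e.surjective hH)
  · intro G _ H hG hH
    exact hG (isSec_of_injective H.subtype H.subtype_injective hH)
  · intro G _ N _ hG hH
    exact hG (isSec_of_surjective (QuotientGroup.mk' N) (QuotientGroup.mk'_surjective N) hH)
  · rintro G _ N _ hNs hQ ⟨H, φ, hφ⟩
    let M : Subgroup K := (N.subgroupOf H).map φ
    have hMn : M.Normal := Subgroup.Normal.map inferInstance φ hφ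
    by_cases hM : M = ⊥
    · apply hQ
      refine isSec_of_fun (fun q b => ∃ a : H, QuotientGroup.mk' N (a : G) = q ∧ φ a = b)
        ?_ ?_ ?_ ?_ ?_
      · exact ⟨1, by simp, by simp⟩
      · rintro _ _ _ _ ⟨a, rfl, rfl⟩ ⟨b, rfl, rfl⟩
        exact ⟨a * b, by simp, by simp⟩
      · rintro _ _ ⟨a, rfl, rfl⟩
        exact ⟨a⁻¹, by simp, by simp⟩
      · rintro _ _ _ ⟨a, rfl, rfl⟩ ⟨b, hb, rfl⟩
        have h1 : ((a⁻¹ * b : H) : G) ∈ N := by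
          have := QuotientGroup.eq.1 hb.symm
          simpa using this
        have h2 : φ (a⁻¹ * b) ∈ M := ⟨a⁻¹ * b, h1, rfl⟩
        rw [hM, Subgroup.mem_bot, map_mul, map_inv, inv_mul_eq_one] at h2
        exact h2
      · intro b
        obtain ⟨a, rfl⟩ := hφ b
        exact ⟨_, a, rfl, rfl⟩
    · apply hNs
      have hs := hN M hMn hM
      have : IsSec K (N.subgroupOf H) := by
        refine isSec_of_surjective (φ.subgroupMap (N.subgroupOf H))
          (MonoidHom.subgroupMap_surjective _ _) hs
      refine isSec_of_injective
        (((H.subtype.comp (N.subgroupOf H).subtype).codRestrict N (fun a => a.2))) ?_ this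
      intro a b hab
      have := congrArg Subtype.val hab
      exact Subtype.ext (Subtype.ext this)
  · rintro G _ ι H hd hi hc ⟨H0, φ, hφ⟩
    choose f hf using hφ
    have hne : Nonempty ι := ⟨(hc 1).choose⟩
    have key : ∃ i, ∀ t ∈ T, ((f t : H0) : G) ∈ H i := by
      refine Set.Finite.induction_on T hT ?_ ?_
      · exact ⟨hne.some, by simp⟩
      · rintro a s _ _ ⟨i, hi⟩
        obtain ⟨j, hj⟩ := hc (f a)
        obtain ⟨m, h1, h2⟩ := hd i j
        refine ⟨m, ?_⟩
        rintro t (rfl | ht)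
        · exact h2 hj
        · exact h1 (hi t ht)
    obtain ⟨i, hT'⟩ := key
    apply hi i
    have hM : ((H i).subgroupOf H0).map φ = ⊤ := by
      rw [eq_top_iff, ← hTK, Subgroup.closure_le]
      intro t ht
      exact ⟨f t, hT' t ht, hf t⟩
    refine isSec_of_injective
      (L := (H i).subgroupOf H0)
      ((H0.subtype.comp ((H i).subgroupOf H0).subtype).codRestrict (H i) (fun a => a.2)) ?_
      ⟨⊤, φ.comp (((H i).subgroupOf H0).subtype.comp (Subgroup.subtype ⊤)), ?_⟩
    · intro a b hab
      have := congrArg Subtype.val hab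
      exact Subtype.ext (Subtype.ext this)
    · intro b
      have : b ∈ ((H i).subgroupOf H0).map φ := by rw [hM]; trivial
      obtain ⟨a, ha, rfl⟩ := this
      exact ⟨⟨⟨a, ha⟩, trivial⟩, rfl⟩

/-! ### The concrete kneading group -/

/-- Abbreviation for permutations of the tree. -/
abbrev TP := Equiv.Perm (List ℤ)

/-- The underlying function of `atz`. -/
def atFun (z : ℤ) (g : List ℤ → List ℤ) : List ℤ → List ℤ
  | [] => []
  | w :: v => if w = z then w :: g v else w :: v

/-- `g` acting on the subtree under the letter `z`. -/
def atz (z : ℤ) : TP →* TP where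
  toFun g :=
    { toFun := atFun z g
      invFun := atFun z g.symm
      left_inv := by
        rintro (_ | ⟨w, v⟩)
        · rfl
        · by_cases h : w = z <;> simp [atFun, h]
      right_inv := by
        rintro (_ | ⟨w, v⟩)
        · rfl
        · by_cases h : w = z <;> simp [atFun, h] }
  map_one' := by
    ext1 l
    rcases l with (_ | ⟨w, v⟩)
    · rfl
    · by_cases h : w = z <;> simp [atFun, h]
  map_mul' g h := by
    ext1 l
    rcases l with (_ | ⟨w, v⟩)
    · rfl
    · by_cases h : w = z <;> simp [atFun, h]

@[simp] lemma atz_nil (z : ℤ) (g : TP) : atz z g [] = [] := rfl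

lemma atz_cons (z : ℤ) (g : TP) (w : ℤ) (v : List ℤ) :
    atz z g (w :: v) = if w = z then w :: g v else w :: v := rfl

@[simp] lemma atz_same (z : ℤ) (g : TP) (v : List ℤ) : atz z g (z :: v) = z :: g v := by
  simp [atz_cons]

lemma atz_ne {z w : ℤ} (h : w ≠ z) (g : TP) (v : List ℤ) : atz z g (w :: v) = w :: v := by
  simp [atz_cons, h]

lemma atz_disjoint {z w : ℤ} (h : z ≠ w) (g g' : TP) : Commute (atz z g) (atz w g') := by
  apply Equiv.Perm.Disjoint.commute
  rintro (_ | ⟨a, v⟩)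
  · simp
  · by_cases ha : a = z
    · right; exact atz_ne (by rw [ha]; exact h) _ _
    · left; exact atz_ne ha _ _

/-- `g` acting on the subtree under the word `u`. -/
def atw : List ℤ → (TP →* TP)
  | [] => MonoidHom.id _
  | z :: u => (atz z).comp (atw u)

lemma atw_append (u : List ℤ) (g : TP) (v : List ℤ) : atw u g (u ++ v) = u ++ g v := by
  induction u with
  | nil => rfl
  | cons z u ih => simp [atw, ih]

lemma atw_fix (u : List ℤ) (g : TP) (w : List ℤ) (h : w.take u.length ≠ u) :
    atw u g w = w := by
  induction u generalizing w with
  | nil => simp at h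
  | cons z u ih =>
    rcases w with (_ | ⟨a, v⟩)
    · simp [atw]
    · by_cases ha : a = z
      · subst ha
        have : v.take u.length ≠ u := by
          intro h'
          apply h
          simp [h']
        simp [atw, ih v this]
      · simp [atw, atz_ne ha]

section
variable (k p : ℕ) (x y : ℕ → ℤ)

lemma stateAct_injective (s : KState) (v w : List ℤ)
    (h : stateAct k p x y s v = stateAct k p x y s w) : v = w := by
  induction v generalizing s w with
  | nil =>
    cases w with
    | nil => rfl
    | cons b w => simp [stateAct] at h
  | cons a v ih =>
    cases w with
    | nil => simp [stateAct] at h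
    | cons b w =>
      simp only [stateAct, List.cons.injEq] at h
      have hab : a = b := by
        have := h.1
        rcases s with (_ | i) | (_ | j) | _ <;> simp only [KTrans] at this <;>
          (try split_ifs at this) <;> simp_all
      subst hab
      rw [ih _ _ h.2]

lemma stateAct_surjective (s : KState) (v : List ℤ) :
    ∃ w, stateAct k p x y s w = v := by
  induction v generalizing s with
  | nil => exact ⟨[], by simp [stateAct]⟩
  | cons a v ih =>
    have : ∃ b, (KTrans k p x y s b).1 = a := by
      rcases s with (_ | i) | (_ | j) | _
      · exact ⟨a - 1, by simp [KTrans]⟩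
      all_goals
        refine ⟨a, ?_⟩
        simp only [KTrans]
        try split_ifs
        all_goals rfl
    obtain ⟨b, hb⟩ := this
    obtain ⟨w, hw⟩ := ih (KTrans k p x y s b).2
    exact ⟨b :: w, by simp [stateAct, hb, hw]⟩

/-- The permutation given by a state. -/
noncomputable def PS (s : KState) : TP :=
  Equiv.ofBijective (stateAct k p x y s)
    ⟨fun v w h => stateAct_injective k p x y s v w h, fun v => stateAct_surjective k p x y s v⟩

lemma PS_apply (s : KState) (v : List ℤ) : PS k p x y s v = stateAct k p x y s v := rfl

lemma stateAct_id (v : List ℤ) : stateAct k p x y .id v = v := by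
  induction v with
  | nil => rfl
  | cons a v ih => simp [stateAct, KTrans, ih]

lemma PS_a_succ (i : ℕ) : PS k p x y (.a (i+1)) = atz (x i) (PS k p x y (.a i)) := by
  ext1 l
  rcases l with (_ | ⟨w, v⟩)
  · rfl
  · by_cases h : w = x i <;> simp [PS_apply, stateAct, KTrans, atz_cons, h, stateAct_id]

lemma PS_b_succ (i : ℕ) : PS k p x y (.b (i+1)) = atz (y i) (PS k p x y (.b i)) := by
  ext1 l
  rcases l with (_ | ⟨w, v⟩)
  · rfl
  · by_cases h : w = y i <;> simp [PS_apply, stateAct, KTrans, atz_cons, h, stateAct_id]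

lemma PS_b_zero (hxy : x (k - 1) ≠ y (p - 1)) : PS k p x y (.b 0) =
    atz (x (k-1)) (PS k p x y (.a (k-1))) * atz (y (p-1)) (PS k p x y (.b (p-1))) := by
  ext1 l
  rcases l with (_ | ⟨w, v⟩)
  · rfl
  · rw [Equiv.Perm.mul_apply]
    by_cases h : w = x (k-1)
    · simp [PS_apply, stateAct, KTrans, atz_cons, h, hxy]
    · by_cases h' : w = y (p-1)
      · simp [PS_apply, stateAct, KTrans, atz_cons, h', hxy.symm]
      · simp [PS_apply, stateAct, KTrans, atz_cons, h, h', stateAct_id]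

lemma sigma_nil : PS k p x y (.a 0) [] = [] := rfl

lemma sigma_cons (w : ℤ) (v : List ℤ) : PS k p x y (.a 0) (w :: v) = (w + 1) :: v := by
  simp [PS_apply, stateAct, KTrans, stateAct_id]

lemma sigma_pow_cons (n : ℕ) (w : ℤ) (v : List ℤ) :
    (PS k p x y (.a 0) ^ n) (w :: v) = (w + n) :: v := by
  induction n with
  | zero => simp
  | succ n ih => rw [pow_succ', Equiv.Perm.mul_apply, ih, sigma_cons]; push_cast; ring_nf

lemma sigma_zpow_cons (n : ℤ) (w : ℤ) (v : List ℤ) :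
    (PS k p x y (.a 0) ^ n) (w :: v) = (w + n) :: v := by
  obtain ⟨m, rfl | rfl⟩ := n.eq_nat_or_neg
  · rw [zpow_natCast, sigma_pow_cons]
  · rw [zpow_neg, zpow_natCast, Equiv.Perm.inv_eq_iff_eq, sigma_pow_cons]; simp

lemma sigma_zpow_nil (n : ℤ) : (PS k p x y (.a 0) ^ n) [] = [] := by
  have : ∀ m : ℕ, (PS k p x y (.a 0) ^ m) [] = [] := by
    intro m
    induction m with
    | zero => simp
    | succ n ih => rw [pow_succ', Equiv.Perm.mul_apply, ih, sigma_nil]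
  obtain ⟨m, rfl | rfl⟩ := n.eq_nat_or_neg
  · rw [zpow_natCast, this]
  · rw [zpow_neg, zpow_natCast, Equiv.Perm.inv_eq_iff_eq, this]

lemma sigma_conj (n z : ℤ) (g : TP) :
    PS k p x y (.a 0) ^ n * atz z g * (PS k p x y (.a 0) ^ n)⁻¹ = atz (z + n) g := by
  rw [mul_inv_eq_iff_eq_mul]
  ext1 l
  rw [Equiv.Perm.mul_apply, Equiv.Perm.mul_apply]
  rcases l with (_ | ⟨w, v⟩)
  · rw [atz_nil, sigma_zpow_nil, atz_nil]
  · rw [sigma_zpow_cons]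
    by_cases h : w = z
    · subst h
      rw [atz_same, atz_same, sigma_zpow_cons]
    · rw [atz_ne h, atz_ne (by simpa using h), sigma_zpow_cons]

lemma PS_mem (s : KState) (hs : IsGen k p s) : PS k p x y s ∈ Kgroup k p x y :=
  Subgroup.subset_closure ⟨s, hs, rfl⟩

lemma mem_SGens {g : TP} (hg : g ∈ SGens k p x y) : ∃ s, IsGen k p s ∧ g = PS k p x y s := by
  obtain ⟨s, hs, h⟩ := hg
  exact ⟨s, hs, DFunLike.coe_injective h⟩

lemma SGens_finite : (SGens k p x y).Finite := by
  refine (((Set.finite_lt_nat k).image (fun i => PS k p x y (.a i))).union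
    ((Set.finite_lt_nat p).image (fun i => PS k p x y (.b i)))).subset ?_
  intro g hg
  obtain ⟨s, (⟨i, hi, rfl⟩ | ⟨i, hi, rfl⟩), rfl⟩ := mem_SGens k p x y hg
  · exact Or.inl ⟨i, hi, rfl⟩
  · exact Or.inr ⟨i, hi, rfl⟩

lemma sigma_mem
    (hk : 1 ≤ k) (n : ℤ) : PS k p x y (.a 0) ^ n ∈ Kgroup k p x y :=
  Subgroup.zpow_mem _ (PS_mem k p x y _ (Or.inl ⟨0, hk, rfl⟩)) n

lemma atz_a_mem
    (hk : 1 ≤ k) (i : ℕ) (hi : i + 1 < k) (z : ℤ) :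
    atz z (PS k p x y (.a i)) ∈ Kgroup k p x y := by
  have h1 := PS_mem k p x y (.a (i+1)) (Or.inl ⟨_, hi, rfl⟩)
  rw [PS_a_succ] at h1
  have h2 := sigma_mem k p x y hk (z - x i)
  have := Subgroup.mul_mem _ (Subgroup.mul_mem _ h2 h1) (Subgroup.inv_mem _ h2)
  rw [sigma_conj] at this
  simpa using this

lemma atz_b_mem
    (hk : 1 ≤ k) (i : ℕ) (hi : i + 1 < p) (z : ℤ) :
    atz z (PS k p x y (.b i)) ∈ Kgroup k p x y := by
  have h1 := PS_mem k p x y (.b (i+1)) (Or.inr ⟨_, hi, rfl⟩)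
  rw [PS_b_succ] at h1
  have h2 := sigma_mem k p x y hk (z - y i)
  have := Subgroup.mul_mem _ (Subgroup.mul_mem _ h2 h1) (Subgroup.inv_mem _ h2)
  rw [sigma_conj] at this
  simpa using this

lemma c_mem
    (hk : 1 ≤ k) (hp : 1 ≤ p) (hxy : x (k - 1) ≠ y (p - 1)) (z : ℤ) :
    atz z (PS k p x y (.a (k-1))) * atz (z + (y (p-1) - x (k-1))) (PS k p x y (.b (p-1)))
      ∈ Kgroup k p x y := by
  have h1 := PS_mem k p x y (.b 0) (Or.inr ⟨_, hp, rfl⟩)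
  rw [PS_b_zero k p x y hxy] at h1
  have h2 := sigma_mem k p x y hk (z - x (k-1))
  have := Subgroup.mul_mem _ (Subgroup.mul_mem _ h2 h1) (Subgroup.inv_mem _ h2)
  rw [← conj_mul, sigma_conj, sigma_conj] at this
  convert this using 3 <;> congr 1 <;> ring

/-- The three kinds of lifts of generators. -/
lemma gen_lift
    (hk : 1 ≤ k) (hp : 1 ≤ p) (hxy : x (k - 1) ≠ y (p - 1)) {g : TP} (hg : g ∈ SGens k p x y) (z : ℤ) :
    (atz z g ∈ Kgroup k p x y) ∨
    (g = PS k p x y (.a (k-1)) ∧ atz z g *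
      atz (z + (y (p-1) - x (k-1))) (PS k p x y (.b (p-1))) ∈ Kgroup k p x y) ∨
    (g = PS k p x y (.b (p-1)) ∧ atz z g *
      atz (z - (y (p-1) - x (k-1))) (PS k p x y (.a (k-1))) ∈ Kgroup k p x y) := by
  obtain ⟨s, (⟨i, hi, rfl⟩ | ⟨i, hi, rfl⟩), rfl⟩ := mem_SGens k p x y hg
  · by_cases h : i + 1 < k
    · exact Or.inl (atz_a_mem k p x y hk i h z)
    · obtain rfl : i = k - 1 := by omega
      exact Or.inr (Or.inl ⟨rfl, c_mem k p x y hk hp hxy z⟩)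
  · by_cases h : i + 1 < p
    · exact Or.inl (atz_b_mem k p x y hk i h z)
    · obtain rfl : i = p - 1 := by omega
      refine Or.inr (Or.inr ⟨rfl, ?_⟩)
      have := c_mem k p x y hk hp hxy (z - (y (p-1) - x (k-1)))
      rw [sub_add_cancel, (atz_disjoint _ _ _).eq] at this
      · exact this
      · intro h'; apply hxy; linarith

open scoped commutatorElement

/-- `s` fixes the word `w` and acts as `g` on the subtree below it. -/
def Proj (w : List ℤ) (s g : TP) : Prop := ∀ v, s (w ++ v) = w ++ g v

lemma Proj.one (w : List ℤ) : Proj w 1 1 := fun _ => rfl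

lemma Proj.mul {w : List ℤ} {s g s' g' : TP} (h : Proj w s g) (h' : Proj w s' g') :
    Proj w (s * s') (g * g') := by
  intro v
  rw [Equiv.Perm.mul_apply, h', h, Equiv.Perm.mul_apply]

lemma Proj.inv {w : List ℤ} {s g : TP} (h : Proj w s g) : Proj w s⁻¹ g⁻¹ := by
  intro v
  rw [Equiv.Perm.inv_eq_iff_eq, h]
  simp

lemma Proj.comm {w : List ℤ} {s g s' g' : TP} (h : Proj w s g) (h' : Proj w s' g') :
    Proj w ⁅s, s'⁆ ⁅g, g'⁆ :=
  ((h.mul h').mul h.inv).mul h'.inv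

lemma Proj.unique {w : List ℤ} {s g g' : TP} (h : Proj w s g) (h' : Proj w s g') : g = g' := by
  ext1 v
  exact List.append_cancel_left ((h v).symm.trans (h' v))

lemma Proj.trans {w w' : List ℤ} {s g h : TP} (h1 : Proj w s g) (h2 : Proj w' g h) :
    Proj (w ++ w') s h := by
  intro v
  rw [List.append_assoc, h1, h2, List.append_assoc]

lemma Proj.atz_same (z : ℤ) (g : TP) : Proj [z] (atz z g) g := fun v => by simp

lemma Proj.atz_ne {z w : ℤ} (h : w ≠ z) (g : TP) : Proj [w] (atz z g) 1 :=
  fun v => by simp [_root_.atz_ne h]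

/-- Conjugation by a projected element. -/
lemma Proj.conj {z : ℤ} {s g : TP} (h : Proj [z] s g) (t : TP) :
    s * atz z t * s⁻¹ = atz z (g * t * g⁻¹) := by
  rw [mul_inv_eq_iff_eq_mul]
  have hc : ∀ v, s (z :: v) = z :: g v := h
  ext1 l
  rw [Equiv.Perm.mul_apply, Equiv.Perm.mul_apply]
  by_cases hl : ∃ v, l = z :: v
  · obtain ⟨v, rfl⟩ := hl
    rw [_root_.atz_same, hc, hc, _root_.atz_same]
    simp
  · have h1 : ∀ l : List ℤ, (¬ ∃ v, l = z :: v) → ∀ t, atz z t l = l := by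
      rintro (_ | ⟨a, v⟩) hl t
      · rfl
      · apply _root_.atz_ne
        rintro rfl
        exact hl ⟨v, rfl⟩
    rw [h1 l hl, h1]
    rintro ⟨v, hv⟩
    apply hl
    refine ⟨g⁻¹ v, ?_⟩
    apply s.injective
    rw [hv, hc]
    simp

lemma gen_proj
    (hk : 1 ≤ k) (hp : 1 ≤ p) (hxy : x (k - 1) ≠ y (p - 1)) {g : TP} (hg : g ∈ SGens k p x y) (z : ℤ) :
    ∃ u ∈ Kgroup k p x y, Proj [z] u g ∧ Proj [z - 2 * (y (p-1) - x (k-1))] u 1 := by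
  have hd : y (p-1) - x (k-1) ≠ 0 := by
    intro h; apply hxy; linarith
  generalize hD : y (p-1) - x (k-1) = d at *
  have e1 : z - 2 * d ≠ z := by omega
  rcases gen_lift k p x y hk hp hxy hg z with h | ⟨_, h⟩ | ⟨_, h⟩
  · exact ⟨_, h, Proj.atz_same z g, Proj.atz_ne e1 g⟩
  · rw [hD] at h
    refine ⟨_, h, ?_, ?_⟩
    · simpa using (Proj.atz_same z g).mul (Proj.atz_ne (show z ≠ z + d by omega) _)
    · simpa using (Proj.atz_ne e1 g).mul (Proj.atz_ne (show z - 2 * d ≠ z + d by omega) _)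
  · rw [hD] at h
    refine ⟨_, h, ?_, ?_⟩
    · simpa using (Proj.atz_same z g).mul (Proj.atz_ne (show z ≠ z - d by omega) _)
    · simpa using (Proj.atz_ne e1 g).mul (Proj.atz_ne (show z - 2 * d ≠ z - d by omega) _)

/-- The derived subgroup. -/
def DK : Subgroup TP := ⁅Kgroup k p x y, Kgroup k p x y⁆

lemma DK_le : DK k p x y ≤ Kgroup k p x y := Subgroup.commutator_le_self _

lemma DK_proj
    (hk : 1 ≤ k) (hp : 1 ≤ p) (hxy : x (k - 1) ≠ y (p - 1)) {g : TP} (hg : g ∈ Kgroup k p x y) (z : ℤ) :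
    ∃ s ∈ DK k p x y, Proj [z] s g := by
  induction hg using Subgroup.closure_induction with
  | mem g hg =>
    obtain ⟨u, hu, h1, h2⟩ := gen_proj k p x y hk hp hxy hg z
    set m := 2 * (y (p-1) - x (k-1)) with hm
    have ht := sigma_mem k p x y hk m
    refine ⟨⁅u, PS k p x y (.a 0) ^ m⁆, Subgroup.commutator_mem_commutator hu ht, ?_⟩
    have h3 : Proj [z] (PS k p x y (.a 0) ^ m * u⁻¹ * (PS k p x y (.a 0) ^ m)⁻¹) 1 := by
      intro v
      have e : (PS k p x y (.a 0) ^ m)⁻¹ ([z] ++ v) = [z - m] ++ v := by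
        rw [Equiv.Perm.inv_eq_iff_eq]
        simp [sigma_zpow_cons]
      have h4 := h2.inv v
      rw [Equiv.Perm.mul_apply, Equiv.Perm.mul_apply, e, h4]
      simp [sigma_zpow_cons]
    have := h1.mul h3
    rw [mul_one] at this
    simpa only [commutatorElement_def, mul_assoc] using this
  | one => exact ⟨1, Subgroup.one_mem _, Proj.one _⟩
  | mul a b _ _ iha ihb =>
    obtain ⟨s, hs, h⟩ := iha
    obtain ⟨t, ht, h'⟩ := ihb
    exact ⟨s * t, Subgroup.mul_mem _ hs ht, h.mul h'⟩
  | inv a _ iha =>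
    obtain ⟨s, hs, h⟩ := iha
    exact ⟨s⁻¹, Subgroup.inv_mem _ hs, h.inv⟩

lemma DDK_proj
    (hk : 1 ≤ k) (hp : 1 ≤ p) (hxy : x (k - 1) ≠ y (p - 1)) {g : TP} (hg : g ∈ DK k p x y) (z : ℤ) :
    ∃ s ∈ ⁅DK k p x y, DK k p x y⁆, Proj [z] s g := by
  rw [DK, Subgroup.commutator_def] at hg
  induction hg using Subgroup.closure_induction with
  | mem g hg =>
    obtain ⟨a, ha, b, hb, rfl⟩ := hg
    obtain ⟨s, hs, h⟩ := DK_proj k p x y hk hp hxy ha z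
    obtain ⟨t, ht, h'⟩ := DK_proj k p x y hk hp hxy hb z
    exact ⟨_, Subgroup.commutator_mem_commutator hs ht, h.comm h'⟩
  | one => exact ⟨1, Subgroup.one_mem _, Proj.one _⟩
  | mul a b _ _ iha ihb =>
    obtain ⟨s, hs, h⟩ := iha
    obtain ⟨t, ht, h'⟩ := ihb
    exact ⟨s * t, Subgroup.mul_mem _ hs ht, h.mul h'⟩
  | inv a _ iha =>
    obtain ⟨s, hs, h⟩ := iha
    exact ⟨s⁻¹, Subgroup.inv_mem _ hs, h.inv⟩

lemma DDK_proj2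
    (hk : 1 ≤ k) (hp : 1 ≤ p) (hxy : x (k - 1) ≠ y (p - 1)) {g : TP} (hg : g ∈ Kgroup k p x y) :
    ∃ s ∈ ⁅DK k p x y, DK k p x y⁆, Proj [0, 0] s g := by
  obtain ⟨s, hs, h⟩ := DK_proj k p x y hk hp hxy hg 0
  obtain ⟨t, ht, h'⟩ := DDK_proj k p x y hk hp hxy hs 0
  exact ⟨t, ht, h'.trans h⟩

lemma comm_of_gen {G : Type} [Group G] (T : Set G) (M : Subgroup G)
    (hM : ∀ g ∈ Subgroup.closure T, ∀ m ∈ M, g * m * g⁻¹ ∈ M)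
    (hT : ∀ s ∈ T, ∀ t ∈ T, ⁅s, t⁆ ∈ M) {g h : G}
    (hg : g ∈ Subgroup.closure T) (hh : h ∈ Subgroup.closure T) : ⁅g, h⁆ ∈ M := by
  have step : ∀ (t : G), (∀ s ∈ T, ⁅s, t⁆ ∈ M) → ∀ g ∈ Subgroup.closure T, ⁅g, t⁆ ∈ M := by
    intro t ht g hg
    induction hg using Subgroup.closure_induction with
    | mem g hg => exact ht g hg
    | one => simp
    | mul a b ha _ iha ihb =>
      have : ⁅a * b, t⁆ = (a * ⁅b, t⁆ * a⁻¹) * ⁅a, t⁆ := by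
        simp only [commutatorElement_def]; group
      rw [this]
      exact M.mul_mem (hM a ha _ ihb) iha
    | inv a ha iha =>
      have : ⁅a⁻¹, t⁆ = a⁻¹ * ⁅a, t⁆⁻¹ * a⁻¹⁻¹ := by
        simp only [commutatorElement_def]; group
      rw [this]
      exact hM _ (Subgroup.inv_mem _ ha) _ (M.inv_mem iha)
  refine step h ?_ g hg
  intro s hs
  rw [← commutatorElement_inv]
  exact M.inv_mem (step s (fun t ht => hT t ht s hs) h hh)

lemma lift_comm (z : ℤ) {s t r r' : TP} (K : Subgroup TP)
    (h1 : atz z s * r ∈ K) (h2 : atz z t * r' ∈ K)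
    (c1 : ∀ g, Commute r (atz z g)) (c2 : ∀ g, Commute r' (atz z g)) (c : Commute r r') :
    atz z ⁅s, t⁆ ∈ ⁅K, K⁆ := by
  have := Subgroup.commutator_mem_commutator h1 h2
  have e : ⁅atz z s * r, atz z t * r'⁆ = ⁅atz z s, atz z t⁆ * ⁅r, r'⁆ := by
    have a1 := (c1 t)
    have a2 := (c2 s).inv_right
    have a3 := (c2 t).inv_right
    have a4 := ((c1 s).inv_right)
    have a5 := ((c1 t).inv_right)
    have hr : Commute (r * r' * r⁻¹) ((atz z s)⁻¹) := (a4.mul_left a2).mul_left a4.inv_left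
    have hr2 : Commute (r * r' * r⁻¹ * r'⁻¹) ((atz z t)⁻¹) :=
      ((a5.mul_left a3).mul_left a5.inv_left).mul_left a3.inv_left
    have hs' : ∀ w, r * (atz z t * w) = atz z t * (r * w) := fun w => by
      rw [← mul_assoc, a1.eq, mul_assoc]
    simp only [commutatorElement_def, mul_inv_rev]
    calc _ = atz z s * (r * (atz z t * (r' * r⁻¹ * (atz z s)⁻¹ * r'⁻¹ * (atz z t)⁻¹))) := by group
      _ = atz z s * atz z t * ((r * r' * r⁻¹) * (atz z s)⁻¹) * r'⁻¹ * (atz z t)⁻¹ := by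
        rw [hs']; group
      _ = atz z s * atz z t * (atz z s)⁻¹ * ((r * r' * r⁻¹ * r'⁻¹) * (atz z t)⁻¹) := by
        rw [hr.eq]; group
      _ = _ := by rw [hr2.eq]; group
  rw [e, commutatorElement_eq_one_iff_commute.2 c, mul_one, ← map_commutatorElement] at this
  exact this

lemma atz_DK
    (hk : 1 ≤ k) (hp : 1 ≤ p) (hxy : x (k - 1) ≠ y (p - 1)) (z : ℤ) {g : TP} (hg : g ∈ DK k p x y) : atz z g ∈ DK k p x y := by
  have hd : y (p-1) - x (k-1) ≠ 0 := by
    intro h; apply hxy; linarith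
  suffices h : DK k p x y ≤ (DK k p x y).comap (atz z) from h hg
  conv_lhs => rw [DK]
  rw [Subgroup.commutator_le]
  intro a ha b hb
  refine comm_of_gen (SGens k p x y) _ ?_ ?_ ha hb
  · intro g hg m hm
    obtain ⟨s, hs, h⟩ := DK_proj k p x y hk hp hxy hg z
    rw [Subgroup.mem_comap, ← h.conj]
    rw [Subgroup.mem_comap] at hm
    exact Subgroup.mul_mem _ (Subgroup.mul_mem _ hs hm) (Subgroup.inv_mem _ hs)
  · intro s hs t ht
    rw [Subgroup.mem_comap, DK]
    have hs' := gen_lift k p x y hk hp hxy hs z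
    have ht' := gen_lift k p x y hk hp hxy ht z
    generalize y (p-1) - x (k-1) = d at *
    have n1 : z + d ≠ z := by omega
    have n2 : z - d ≠ z := by omega
    have n3 : z + d ≠ z - d := by omega
    have one : ∀ {s}, atz z s ∈ Kgroup k p x y → atz z s * 1 ∈ Kgroup k p x y := by
      intro s h; rwa [mul_one]
    rcases hs' with h | ⟨e, h⟩ | ⟨e, h⟩ <;> rcases ht' with h' | ⟨e', h'⟩ | ⟨e', h'⟩
    · exact lift_comm z _ (one h) (one h') (fun g => Commute.one_left _)
        (fun g => Commute.one_left _) (Commute.one_left _)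
    · exact lift_comm z _ (one h) h' (fun g => Commute.one_left _)
        (fun g => atz_disjoint n1 _ _) (Commute.one_left _)
    · exact lift_comm z _ (one h) h' (fun g => Commute.one_left _)
        (fun g => atz_disjoint n2 _ _) (Commute.one_left _)
    · exact lift_comm z _ h (one h') (fun g => atz_disjoint n1 _ _)
        (fun g => Commute.one_left _) (Commute.one_right _)
    · rw [e, e', commutatorElement_self, map_one]; exact Subgroup.one_mem _
    · exact lift_comm z _ h h' (fun g => atz_disjoint n1 _ _)
        (fun g => atz_disjoint n2 _ _) (atz_disjoint n3 _ _)
    · exact lift_comm z _ h (one h') (fun g => atz_disjoint n2 _ _)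
        (fun g => Commute.one_left _) (Commute.one_right _)
    · exact lift_comm z _ h h' (fun g => atz_disjoint n2 _ _)
        (fun g => atz_disjoint n1 _ _) (atz_disjoint n3.symm _ _)
    · rw [e, e', commutatorElement_self, map_one]; exact Subgroup.one_mem _

lemma atw_DK
    (hk : 1 ≤ k) (hp : 1 ≤ p) (hxy : x (k - 1) ≠ y (p - 1)) (u : List ℤ) {g : TP} (hg : g ∈ DK k p x y) : atw u g ∈ DK k p x y := by
  induction u with
  | nil => exact hg
  | cons z u ih => exact atz_DK k p x y hk hp hxy z ih

lemma stateAct_take (s : KState) (w : List ℤ) (n : ℕ) :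
    stateAct k p x y s (w.take n) = (stateAct k p x y s w).take n := by
  induction w generalizing s n with
  | nil => simp [stateAct]
  | cons a w ih =>
    cases n with
    | zero => simp [stateAct]
    | succ n => simp [stateAct, ih]

lemma stateAct_length (s : KState) (w : List ℤ) :
    (stateAct k p x y s w).length = w.length := by
  induction w generalizing s with
  | nil => simp [stateAct]
  | cons a w ih => simp [stateAct, ih]

lemma K_take {g : TP} (hg : g ∈ Kgroup k p x y) : ∀ w n, g (w.take n) = (g w).take n := by
  induction hg using Subgroup.closure_induction with
  | mem g hg =>
    obtain ⟨s, _, rfl⟩ := mem_SGens k p x y hg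
    exact stateAct_take k p x y s
  | one => simp
  | mul a b _ _ iha ihb => intro w n; simp [iha, ihb]
  | inv a _ iha =>
    intro w n
    rw [Equiv.Perm.inv_eq_iff_eq, iha]; simp

lemma disj_comm {g : TP} (hg : g ∈ Kgroup k p x y) {v : List ℤ} (hv : g⁻¹ v ≠ v) (s t : TP) :
    Commute (g * atw v s * g⁻¹) (atw v t) := by
  apply Equiv.Perm.Disjoint.commute
  intro w
  by_cases hw : w.take v.length = v
  · left
    rw [Equiv.Perm.mul_apply, Equiv.Perm.mul_apply, atw_fix]
    · simp
    · rw [← K_take k p x y (Subgroup.inv_mem _ hg), hw]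
      exact hv
  · right
    exact atw_fix v t w hw

lemma normal_sec
    (hk : 1 ≤ k) (hp : 1 ≤ p) (hxy : x (k - 1) ≠ y (p - 1)) (N : Subgroup (Kgroup k p x y)) (hN : N.Normal) (hne : N ≠ ⊥) :
    IsSec (Kgroup k p x y) N := by
  obtain ⟨⟨g, hgK⟩, hgN, hg1⟩ := Subgroup.ne_bot_iff_exists_ne_one.1 hne |>.elim
    (fun a ha => (⟨a.1, a.2, fun h => ha (Subtype.ext h)⟩ : ∃ a : Kgroup k p x y, a ∈ N ∧ a ≠ 1))
  have : ∃ v, g⁻¹ v ≠ v := by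
    by_contra! h
    apply hg1
    apply Subtype.ext
    change g = 1
    rw [← inv_eq_one]
    ext1 v
    exact h v
  obtain ⟨v, hv⟩ := this
  let N' : Subgroup TP := N.map (Kgroup k p x y).subtype
  have hgN' : g ∈ N' := ⟨⟨g, hgK⟩, hgN, rfl⟩
  have hconj : ∀ h ∈ Kgroup k p x y, ∀ n ∈ N', h * n * h⁻¹ ∈ N' := by
    rintro h hh _ ⟨n, hn, rfl⟩
    exact ⟨⟨h, hh⟩ * n * ⟨h, hh⟩⁻¹, hN.conj_mem n hn _, rfl⟩
  have hD : ⁅DK k p x y, DK k p x y⁆ ≤ N'.comap (atw v) := by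
    rw [Subgroup.commutator_le]
    intro s hs t ht
    rw [Subgroup.mem_comap]
    have hs1 := DK_le k p x y (atw_DK k p x y hk hp hxy v (Subgroup.inv_mem _ hs))
    have ht1 := DK_le k p x y (atw_DK k p x y hk hp hxy v ht)
    set h1 := atw v s⁻¹ with hh1
    set h2 := atw v t with hh2
    have c1 : Commute (g * h1 * g⁻¹) h2 := disj_comm k p x y hgK hv _ _
    have c2 : Commute (g * h1 * g⁻¹) h1 := disj_comm k p x y hgK hv _ _
    have m1 : g * h1 * g⁻¹ * h1⁻¹ ∈ N' := by
      have := N'.mul_mem hgN' (hconj h1 hs1 _ (N'.inv_mem hgN'))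
      simpa only [mul_assoc] using this
    have m2 : (g * h1 * g⁻¹ * h1⁻¹) * (h2 * (g * h1 * g⁻¹ * h1⁻¹)⁻¹ * h2⁻¹) ∈ N' :=
      N'.mul_mem m1 (hconj h2 ht1 _ (N'.inv_mem m1))
    generalize g * h1 * g⁻¹ = q at *
    have e : (q * h1⁻¹) * (h2 * (q * h1⁻¹)⁻¹ * h2⁻¹) = h1⁻¹ * h2 * h1 * h2⁻¹ := by
      have c3 : Commute q (h1⁻¹ * h2 * h1) := (c2.inv_right.mul_right c1).mul_right c2
      calc _ = (q * (h1⁻¹ * h2 * h1)) * q⁻¹ * h2⁻¹ := by group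
        _ = _ := by rw [c3.eq]; group
    rw [e] at m2
    have e2 : atw v ⁅s, t⁆ = h1⁻¹ * h2 * h1 * h2⁻¹ := by
      simp [hh1, hh2, commutatorElement_def]
    rw [e2]; exact m2
  refine isSec_of_fun (fun a b => Proj (v ++ [0, 0]) ((a : Kgroup k p x y) : TP) (b : TP))
    ?_ ?_ ?_ ?_ ?_
  · exact Proj.one _
  · intro a b c d h h'; exact h.mul h'
  · intro a b h; exact h.inv
  · intro a b c h h'; exact Subtype.ext (h.unique h')
  · rintro ⟨b, hb⟩
    obtain ⟨s, hs, h⟩ := DDK_proj2 k p x y hk hp hxy hb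
    obtain ⟨n, hn, hns⟩ := hD hs
    refine ⟨⟨n, hn⟩, ?_⟩
    have hp1 : Proj v (atw v s) s := fun w => atw_append v s w
    have := hp1.trans h
    rw [← hns] at this
    exact this

lemma PS_a_ne_one (i : ℕ) : ∃ v, PS k p x y (.a i) v ≠ v := by
  induction i with
  | zero => exact ⟨[0], by simp [sigma_cons]⟩
  | succ i ih =>
    obtain ⟨v, hv⟩ := ih
    exact ⟨x i :: v, by simpa [PS_a_succ] using hv⟩

lemma free_semigroup
    (hxy : x (k - 1) ≠ y (p - 1)) (l l' : List Bool) (hl : l.length = l'.length)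
    (h : posWord (PS k p x y (.a 0) ^ (2 * (y (p-1) - x (k-1))) * PS k p x y (.b 0))
        (PS k p x y (.a 0) ^ (2 * (y (p-1) - x (k-1)))) l =
      posWord (PS k p x y (.a 0) ^ (2 * (y (p-1) - x (k-1))) * PS k p x y (.b 0))
        (PS k p x y (.a 0) ^ (2 * (y (p-1) - x (k-1)))) l') : l = l' := by
  have hd : y (p-1) - x (k-1) ≠ 0 := by
    intro h; apply hxy; linarith
  have hy : y (p-1) = x (k-1) + (y (p-1) - x (k-1)) := by ring
  have hb := PS_b_zero k p x y hxy
  generalize hD : y (p-1) - x (k-1) = d at *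
  rw [hy] at hb
  generalize x (k-1) = X at *
  set c := PS k p x y (.b 0) with hc
  set t := PS k p x y (.a 0) ^ (2 * d) with ht
  have tc : ∀ w v, t (w :: v) = (w + 2 * d) :: v := fun w v => sigma_zpow_cons k p x y _ w v
  have cfix : ∀ (m : ℤ) v, m ≠ 0 → c ((X - 2 * d * m) :: v) = (X - 2 * d * m) :: v := by
    intro m v hm
    have h1 : X - 2 * d * m ≠ X := by
      intro h
      have : d * m = 0 := by linarith
      rcases mul_eq_zero.1 this with h | h
      · exact hd h
      · exact hm h
    have h2 : X - 2 * d * m ≠ X + d := by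
      intro h
      have : d * (2 * m + 1) = 0 := by linarith
      rcases mul_eq_zero.1 this with h | h
      · exact hd h
      · omega
    rw [hb, Equiv.Perm.mul_apply, atz_ne h2, atz_ne h1]
  have cX : ∀ v, c (X :: v) = X :: PS k p x y (.a (k-1)) v := by
    intro v
    rw [hb, Equiv.Perm.mul_apply, atz_ne (by intro h; apply hd; linarith), atz_same]
  have run : ∀ (l : List Bool) (m : ℕ) v, l.length ≤ m →
      posWord (t * c) t l ((X - 2 * d * m) :: v) =
        (X - 2 * d * ((m : ℤ) - l.length)) :: v := by
    intro l
    induction l with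
    | nil => intro m v _; simp [posWord]
    | cons e l ih =>
      intro m v hm
      simp only [List.length_cons] at hm
      have hw : posWord (t * c) t (e :: l) = (if e then t * c else t) * posWord (t * c) t l := by
        simp [posWord]
      rw [hw, Equiv.Perm.mul_apply, ih m v (by omega)]
      have hne : (m : ℤ) - l.length ≠ 0 := by omega
      have hcase : (if e then t * c else t) ((X - 2 * d * ((m : ℤ) - l.length)) :: v) =
          t ((X - 2 * d * ((m : ℤ) - l.length)) :: v) := by
        cases e
        · rfl
        · simp only [if_true]
          rw [Equiv.Perm.mul_apply, cfix _ _ hne]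
      rw [hcase, tc, List.length_cons]
      push_cast
      congr 1
      ring
  obtain ⟨v, hv⟩ := PS_a_ne_one k p x y (k-1)
  induction l generalizing l' with
  | nil => exact (List.length_eq_zero_iff.1 hl.symm).symm
  | cons e l ih =>
    cases l' with
    | nil => simp at hl
    | cons e' l' =>
      have hl' : l.length = l'.length := by simpa using hl
      have hw : ∀ e l, posWord (t * c) t (e :: l) =
          (if e then t * c else t) * posWord (t * c) t l := by
        intro e l; simp [posWord]
      rw [hw, hw] at h
      have hee : e = e' := by
        have h1 := congrArg (fun f : TP => f ((X - 2 * d * (l.length : ℕ)) :: v)) h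
        simp only [Equiv.Perm.mul_apply] at h1
        rw [run l _ v le_rfl, run l' _ v hl'.ge, ← hl'] at h1
        simp only [sub_self, mul_zero, sub_zero] at h1
        cases e <;> cases e' <;> simp [Equiv.Perm.mul_apply, cX, tc] at h1 ⊢
        · exact hv h1.symm
        · exact hv h1
      subst hee
      rw [ih l' hl' (mul_left_cancel h)]

end

theorem stmt13 (k p : ℕ) (hk : 1 ≤ k) (hp : 1 ≤ p) (x y : ℕ → ℤ)
    (hxy : x (k - 1) ≠ y (p - 1)) :
    ¬ IsElemSubexpAmenable ↥(Kgroup k p x y) := by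
  have ht := sigma_mem k p x y hk (2 * (y (p-1) - x (k-1)))
  have hc := PS_mem k p x y (.b 0) (Or.inr ⟨0, hp, rfl⟩)
  have hcoe : ∀ (u v : Kgroup k p x y) l,
      ((posWord u v l : Kgroup k p x y) : TP) = posWord (u : TP) (v : TP) l := by
    intro u v l
    induction l with
    | nil => rfl
    | cons e l ih =>
      have h1 : posWord u v (e :: l) = (if e then u else v) * posWord u v l := by
        simp [posWord]
      have h2 : posWord (u : TP) (v : TP) (e :: l) =
          (if e then (u : TP) else v) * posWord (u : TP) v l := by
        simp [posWord]
      rw [h1, h2, Subgroup.coe_mul, ih]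
      cases e <;> simp
  have hfree : ∀ l l' : List Bool, l.length = l'.length →
      posWord ((⟨_, ht⟩ : Kgroup k p x y) * ⟨_, hc⟩) ⟨_, ht⟩ l =
      posWord ((⟨_, ht⟩ : Kgroup k p x y) * ⟨_, hc⟩) ⟨_, ht⟩ l' → l = l' := by
    intro l l' hl h
    apply free_semigroup k p x y hxy l l' hl
    have h2 := congrArg (Subtype.val) h
    rw [hcoe, hcoe] at h2
    exact h2
  have hcl : Subgroup.closure (((↑) : Subgroup.closure (SGens k p x y) → TP) ⁻¹'
      (SGens k p x y)) = ⊤ := Subgroup.closure_closure_coe_preimage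
  exact abstract_main (Kgroup k p x y) _
    ((SGens_finite k p x y).preimage Subtype.val_injective.injOn) hcl _ _ hfree
    (fun N hN hne => normal_sec k p x y hk hp hxy N hN hne)
end

section
/- The kneading group K is left-orderable: there exists a linear order ≤ on K such that for all g, a, b ∈ K, a ≤ b implies g·a ≤ g·b. -/
/-- Every state acts strictly monotonically for the lexicographic order on words. -/
theorem stateAct_lt (k p : ℕ) (x y : ℕ → ℤ) (v : List ℤ) :
    ∀ (s : KState) (w : List ℤ), v < w → stateAct k p x y s v < stateAct k p x y s w := by
  induction v with
  | nil =>
    intro s w h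
    cases w with
    | nil => exact absurd h (lt_irrefl _)
    | cons b w => simp [stateAct]
  | cons a v ih =>
    intro s w h
    cases w with
    | nil => simp at h
    | cons b w =>
      rw [List.cons_lt_cons_iff] at h
      simp only [stateAct]
      rw [List.cons_lt_cons_iff]
      rcases h with h | ⟨rfl, h⟩
      · left
        rcases s with (_ | i) | (_ | i) | _ <;> simp only [KTrans] <;> (try split_ifs) <;> simpa using h
      · right
        exact ⟨rfl, ih _ _ h⟩

theorem Kgroup_strictMono (k p : ℕ) (x y : ℕ → ℤ) (g : Equiv.Perm (List ℤ))
    (hg : g ∈ Kgroup k p x y) : StrictMono g := by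
  induction hg using Subgroup.closure_induction with
  | mem g hg =>
    obtain ⟨s, -, hs⟩ := hg
    intro v w h
    rw [hs]
    exact stateAct_lt k p x y v s w h
  | one => exact fun _ _ h => h
  | mul a b _ _ ha hb => exact fun _ _ h => ha (hb h)
  | inv a _ ha =>
    intro v w h
    rw [← ha.lt_iff_lt]
    simpa using h

/-- The sequence of values of a permutation along an enumeration of the words. -/
noncomputable def permSeq (g : Equiv.Perm (List ℤ)) : Lex (ℕ → List ℤ) :=
  toLex fun n => g ((Denumerable.eqv (List ℤ)).symm n)

theorem permSeq_injective : Function.Injective permSeq := by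
  intro g h e
  ext1 v
  have := congrFun (congrArg ofLex e) (Denumerable.eqv (List ℤ) v)
  simpa [permSeq] using this

theorem permSeq_mul_le (g a b : Equiv.Perm (List ℤ)) (hg : StrictMono g)
    (h : permSeq a ≤ permSeq b) : permSeq (g * a) ≤ permSeq (g * b) := by
  rcases h.eq_or_lt with h | h
  · rw [permSeq_injective h]
  · apply le_of_lt
    obtain ⟨i, h1, h2⟩ := h
    refine ⟨i, fun j hj => ?_, hg h2⟩
    exact congrArg g (h1 j hj)

theorem stmt14 (k p : ℕ) (hk : 1 ≤ k) (hp : 1 ≤ p) (x y : ℕ → ℤ)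
    (hxy : x (k - 1) ≠ y (p - 1)) :
    ∃ le : ↥(Kgroup k p x y) → ↥(Kgroup k p x y) → Prop,
      IsLinearOrder ↥(Kgroup k p x y) le ∧
      ∀ g a b : ↥(Kgroup k p x y), le a b → le (g * a) (g * b) := by
  refine ⟨fun a b => permSeq a ≤ permSeq b, ?_, fun g a b h =>
    permSeq_mul_le g a b (Kgroup_strictMono k p x y g g.2) h⟩
  exact
    { refl := fun a => le_refl _
      trans := fun a b c h1 h2 => le_trans h1 h2
      antisymm := fun a b h1 h2 => Subtype.ext (permSeq_injective (le_antisymm h1 h2))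
      total := fun a b => le_total _ _ }
end

section
/- The kneading group K is residually solvable: for every g ∈ K with g ≠ 1 there exists a solvable group G and a group homomorphism φ : K → G with φ(g) ≠ 1. -/
/-- Tree permutations whose local action at every vertex is a translation of `ℤ`. -/
def transTree : Subgroup (Equiv.Perm (List ℤ)) where
  carrier := {g | g [] = [] ∧ ∀ v, ∃ c : ℤ, ∀ z, g (v ++ [z]) = g v ++ [z + c]}
  one_mem' := ⟨rfl, fun v => ⟨0, fun z => by simp⟩⟩
  mul_mem' := by
    rintro g h ⟨hg0, hg⟩ ⟨hh0, hh⟩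
    refine ⟨by simp [hg0, hh0], fun v => ?_⟩
    obtain ⟨c, hc⟩ := hh v
    obtain ⟨d, hd⟩ := hg (h v)
    exact ⟨c + d, fun z => by simp [hc, hd, add_assoc]⟩
  inv_mem' := by
    rintro g ⟨hg0, hg⟩
    refine ⟨by rw [Equiv.Perm.inv_eq_iff_eq, hg0], fun v => ?_⟩
    obtain ⟨c, hc⟩ := hg (g⁻¹ v)
    refine ⟨-c, fun z => ?_⟩
    rw [Equiv.Perm.inv_eq_iff_eq, hc]
    simp

theorem stateAct_append (k p : ℕ) (x y : ℕ → ℤ) (v : List ℤ) :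
    ∀ s, ∃ c : ℤ, ∀ z, stateAct k p x y s (v ++ [z]) = stateAct k p x y s v ++ [z + c] := by
  induction v with
  | nil =>
    intro s
    rcases s with (_ | i) | (_ | i) | _
    · exact ⟨1, fun z => by simp [stateAct, KTrans]⟩
    all_goals
      refine ⟨0, fun z => ?_⟩
      simp only [stateAct, KTrans, List.nil_append, add_zero]
      try split_ifs <;> rfl
  | cons a v ih =>
    intro s
    obtain ⟨c, hc⟩ := ih (KTrans k p x y s a).2
    exact ⟨c, fun z => by simp [stateAct, hc]⟩

theorem Kgroup_le_transTree (k p : ℕ) (x y : ℕ → ℤ) : Kgroup k p x y ≤ transTree := by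
  refine (Subgroup.closure_le _).2 ?_
  rintro g ⟨s, -, hs⟩
  refine ⟨by rw [hs]; simp [stateAct], fun v => ?_⟩
  rw [hs]
  exact stateAct_append k p x y v s

/-- The stabilizer in `H` of all words of length `n`. -/
def levelFix (H : Subgroup (Equiv.Perm (List ℤ))) (n : ℕ) : Subgroup H where
  carrier := {g | ∀ v : List ℤ, v.length = n → g.1 v = v}
  one_mem' := fun v _ => rfl
  mul_mem' := by
    intro g h hg hh v hv
    simp [hh v hv, hg v hv]
  inv_mem' := by
    intro g hg v hv
    change g.1⁻¹ v = v
    rw [Equiv.Perm.inv_eq_iff_eq, hg v hv]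

open scoped commutatorElement in
theorem derived_le_levelFix (H : Subgroup (Equiv.Perm (List ℤ))) (hH : H ≤ transTree) (n : ℕ) :
    derivedSeries H n ≤ levelFix H n := by
  induction n with
  | zero =>
    intro g _ v hv
    rw [List.length_eq_zero_iff.1 hv]
    exact (hH g.2).1
  | succ n ih =>
    rw [derivedSeries_succ, Subgroup.commutator_le]
    intro g hg h hh w hw
    have hg := ih hg
    have hh := ih hh
    have key : ∀ w : List ℤ, w.length = n + 1 → ∃ u : List ℤ, (h * g).1 u = w ∧ (g * h).1 u = w := by
      intro w hw
      rcases List.eq_nil_or_concat' w with rfl | ⟨v, z, rfl⟩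
      · simp at hw
      · have hv : v.length = n := by simpa using hw
        obtain ⟨c, hc⟩ := (hH g.2).2 v
        obtain ⟨d, hd⟩ := (hH h.2).2 v
        rw [hg v hv] at hc
        rw [hh v hv] at hd
        refine ⟨v ++ [z - c - d], ?_, ?_⟩ <;> simp [hc, hd]
        ring
    obtain ⟨u, hu1, hu2⟩ := key w hw
    have hcomm : ⁅g, h⁆ * (h * g) = g * h := by rw [commutatorElement_def]; group
    calc (⁅g, h⁆).1 w = (⁅g, h⁆ * (h * g)).1 u := by rw [← hu1]; rfl
      _ = w := by rw [hcomm, hu2]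

theorem stmt15 (k p : ℕ) (hk : 1 ≤ k) (hp : 1 ≤ p) (x y : ℕ → ℤ)
    (hxy : x (k - 1) ≠ y (p - 1)) :
    ∀ g : ↥(Kgroup k p x y), g ≠ 1 →
      ∃ (G : Type) (_ : Group G) (φ : ↥(Kgroup k p x y) →* G),
        IsSolvable G ∧ φ g ≠ 1 := by
  intro g hg
  obtain ⟨w, hw⟩ : ∃ w, g.1 w ≠ w := by
    by_contra! h
    exact hg (Subtype.ext (Equiv.ext h))
  refine ⟨_ ⧸ derivedSeries (Kgroup k p x y) w.length, inferInstance,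
    QuotientGroup.mk' _, ⟨⟨w.length, ?_⟩⟩, fun h => hw ?_⟩
  · rw [← map_derivedSeries_eq (QuotientGroup.mk'_surjective _), Subgroup.map_eq_bot_iff]
    simp
  · exact derived_le_levelFix _ (Kgroup_le_transTree k p x y) _
      ((QuotientGroup.eq_one_iff g).1 h) w rfl
end

section
/- Define states c_m for m ≥ 0 by c_m = a_{m+1} if 0 ≤ m < k, and c_m = b_{j+1} with j = (m − k) mod p if m ≥ k. Then for every m ≥ 0, every s ∈ S and every v ∈ ℤ^m: the section s|_v equals the automorphism induced by the state a₁ (i.e. s|_v acts on length-one words by z ↦ z+1) if and only if (s, v) = (c_m, w_m); and for every other pair (s, v), the section s|_v fixes every length-one word. -/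
/-- The section (restriction) of a state at a finite word, so that
`stateAct s (v ++ w) = stateAct s v ++ stateAct (stateSec s v) w`. -/
def stateSec (k p : ℕ) (x y : ℕ → ℤ) : KState → List ℤ → KState
  | s, [] => s
  | s, z :: v => stateSec k p x y (KTrans k p x y s z).2 v

/-- The kneading sequence (0-indexed): `kappa k p x y n` is the paper's `κ_{n+1}`,
i.e. the sequence `x₁ … x_k y₁ … y_p y₁ … y_p ⋯`. -/
def kappa (k p : ℕ) (x y : ℕ → ℤ) (n : ℕ) : ℤ :=
  if n < k then x n else y ((n - k) % p)

/-- `wword k p x y m` is `w_m`, the reverse of the length-`m` prefix of the kneading sequence. -/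
def wword (k p : ℕ) (x y : ℕ → ℤ) (m : ℕ) : List ℤ :=
  ((List.range m).map (kappa k p x y)).reverse

/-- The state `c_m`: the paper's `a_{m+1}` for `m < k`, and `b_{j+1}` with
`j = (m - k) mod p` for `m ≥ k`. -/
def cstate (k p : ℕ) (m : ℕ) : KState :=
  if m < k then .a m else .b ((m - k) % p)

theorem ks_step_gen (k p : ℕ) (hk : 1 ≤ k) (hp : 1 ≤ p) (x y : ℕ → ℤ) (s : KState) (z : ℤ)
    (hs : IsGen k p s) :
    (KTrans k p x y s z).2 = .id ∨ IsGen k p (KTrans k p x y s z).2 := by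
  rcases hs with ⟨i, hi, rfl⟩ | ⟨i, hi, rfl⟩
  · rcases i with _ | i
    · left; rfl
    · by_cases h : z = x i
      · right; left; exact ⟨i, by omega, by simp [KTrans, h]⟩
      · left; simp [KTrans, h]
  · rcases i with _ | i
    · by_cases h : z = x (k-1)
      · right; left; exact ⟨k-1, by omega, by simp [KTrans, h]⟩
      · by_cases h' : z = y (p-1)
        · right; right; refine ⟨p-1, by omega, ?_⟩
          simp only [KTrans, if_neg h, if_pos h']
        · left; simp [KTrans, h, h']
    · by_cases h : z = y i
      · right; right; exact ⟨i, by omega, by simp [KTrans, h]⟩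
      · left; simp [KTrans, h]

theorem ks_mod_succ (p n : ℕ) (hp : 1 ≤ p) :
    (n % p + 1 < p ∧ (n+1) % p = n % p + 1) ∨ (n % p = p - 1 ∧ (n+1) % p = 0) := by
  have h := Nat.mod_lt n hp
  rcases Nat.lt_or_ge (n % p + 1) p with h1 | h1
  · left
    refine ⟨h1, ?_⟩
    rw [Nat.add_mod_eq_ite]
    have : 1 % p = 1 := Nat.mod_eq_of_lt (by omega)
    rw [this, if_neg (by omega)]
  · right
    have e : n % p = p - 1 := by omega
    refine ⟨e, ?_⟩
    rw [← Nat.mod_add_mod, e, Nat.sub_add_cancel hp, Nat.mod_self]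

theorem ks_step (k p : ℕ) (hk : 1 ≤ k) (hp : 1 ≤ p) (x y : ℕ → ℤ)
    (hxy : x (k - 1) ≠ y (p - 1)) (m : ℕ) (s : KState) (z : ℤ) (hs : IsGen k p s) :
    (KTrans k p x y s z).2 = cstate k p m ↔ s = cstate k p (m+1) ∧ z = kappa k p x y m := by
  have key : (m + 1 < k) ∨ (m + 1 = k) ∨ (k ≤ m ∧ m + 1 - k = (m - k) + 1) := by omega
  rcases key with h | h | ⟨h, he⟩
  · have h' : m < k := by omega
    simp only [cstate, kappa, if_pos h, if_pos h']
    rcases hs with ⟨i, hi, rfl⟩ | ⟨i, hi, rfl⟩ <;> rcases i with _ | i <;>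
      simp only [KTrans] <;> grind
  · subst h
    simp only [cstate, kappa]
    rcases hs with ⟨i, hi, rfl⟩ | ⟨i, hi, rfl⟩ <;> rcases i with _ | i <;>
      simp [KTrans] <;> grind
  · have h1 : ¬ m < k := by omega
    have h2 : ¬ m + 1 < k := by omega
    simp only [cstate, kappa, if_neg h1, if_neg h2, he]
    have hm := ks_mod_succ p (m - k) hp
    generalize (m - k + 1) % p = c at *
    generalize (m - k) % p = d at *
    rcases hs with ⟨i, hi, rfl⟩ | ⟨i, hi, rfl⟩ <;> rcases i with _ | i <;>
      simp only [KTrans] <;> grind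

theorem ks_id (k p : ℕ) (x y : ℕ → ℤ) (v : List ℤ) : stateSec k p x y .id v = .id := by
  induction v with
  | nil => rfl
  | cons z v ih => simpa [stateSec, KTrans] using ih

theorem ks_wword (k p : ℕ) (x y : ℕ → ℤ) (m : ℕ) :
    wword k p x y (m+1) = kappa k p x y m :: wword k p x y m := by
  simp [wword, List.range_succ]

theorem ks_main (k p : ℕ) (hk : 1 ≤ k) (hp : 1 ≤ p) (x y : ℕ → ℤ)
    (hxy : x (k - 1) ≠ y (p - 1)) (v : List ℤ) :
    ∀ s, IsGen k p s → (stateSec k p x y s v = .a 0 ↔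
      s = cstate k p v.length ∧ v = wword k p x y v.length) := by
  induction v with
  | nil =>
    intro s hs
    have : 0 < k := hk
    simp [stateSec, cstate, wword, this]
  | cons z v ih =>
    intro s hs
    have st := ks_step k p hk hp x y hxy v.length s z hs
    rw [List.length_cons, ks_wword, List.cons.injEq, ← and_assoc, ← st]
    simp only [stateSec]
    rcases ks_step_gen k p hk hp x y s z hs with h | h
    · rw [h, ks_id]
      have : KState.id ≠ cstate k p v.length := by
        unfold cstate; split <;> simp
      simp [this]
    · exact ih _ h

theorem ks_fix (k p : ℕ) (x y : ℕ → ℤ) (s : KState) (h : s ≠ .a 0) (z : ℤ) :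
    stateAct k p x y s [z] = [z] := by
  rcases s with (_ | i) | (_ | i) | _ <;> simp [stateAct, KTrans] at h ⊢ <;> grind

theorem stmt17 (k p : ℕ) (hk : 1 ≤ k) (hp : 1 ≤ p) (x y : ℕ → ℤ)
    (hxy : x (k - 1) ≠ y (p - 1)) :
    ∀ (m : ℕ) (s : KState) (v : List ℤ), IsGen k p s → v.length = m →
      (stateAct k p x y (stateSec k p x y s v) = stateAct k p x y (.a 0) ↔
        s = cstate k p m ∧ v = wword k p x y m) ∧
      (¬(s = cstate k p m ∧ v = wword k p x y m) →
        ∀ z : ℤ, stateAct k p x y (stateSec k p x y s v) [z] = [z]) := by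
  intro m s v hs hm
  subst hm
  have hmain := ks_main k p hk hp x y hxy v s hs
  refine ⟨?_, fun h => ks_fix k p x y _ (fun e => h (hmain.1 e))⟩
  rw [← hmain]
  refine ⟨fun e => ?_, fun e => by rw [e]⟩
  by_contra hne
  have h1 := ks_fix k p x y _ hne 0
  rw [e] at h1
  simp [stateAct, KTrans] at h1
end
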